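/- Assume E₀, U, L, K satisfy the hypothesis and define h := {(x,y) ∈ BD(G) ⊕ BD(G) : π*_{BD(G)}x ∈ E₀ and K^⋄Kπ*_{BD(G)}x − L^⋄π*_{BD(D)}Ġy ∈ E}. Then h is a linear subspace of BD(G) ⊕ BD(G) and h is maximal monotone. -/

import Mathlib

open scoped ComplexInnerProductSpace
open Filter Topology Classical

noncomputable section

variable {E H : Type*}
  [NormedAddCommGroup E] [InnerProductSpace ℂ E] [CompleteSpace E]
  [NormedAddCommGroup H] [InnerProductSpace ℂ H] [CompleteSpace H]

/-- The operator `G := (−D₀)*`. -/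
def Gop (D₀ : H →ₗ.[ℂ] E) : E →ₗ.[ℂ] H := (-D₀).adjoint

/-- The operator `D := −(G₀)*`. -/
def Dop (G₀ : E →ₗ.[ℂ] H) : H →ₗ.[ℂ] E := -(G₀.adjoint)

/-- Pointwise application of `G`, defined to be `0` off the domain. -/
def Gap (D₀ : H →ₗ.[ℂ] E) (u : E) : H :=
  if h : u ∈ (Gop D₀).domain then Gop D₀ ⟨u, h⟩ else 0

/-- Pointwise application of `D`, defined to be `0` off the domain. -/
def Dap (G₀ : E →ₗ.[ℂ] H) (w : H) : E :=
  if h : w ∈ (Dop G₀).domain then Dop G₀ ⟨w, h⟩ else 0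

/-- The graph inner product of `D_G`: `⟪x,y⟫_E + ⟪Gx,Gy⟫_H`. -/
def innG (D₀ : H →ₗ.[ℂ] E) (x y : E) : ℂ := ⟪x, y⟫ + ⟪Gap D₀ x, Gap D₀ y⟫

/-- The graph inner product of `D_D`: `⟪x,y⟫_H + ⟪Dx,Dy⟫_E`. -/
def innD (G₀ : E →ₗ.[ℂ] H) (x y : H) : ℂ := ⟪x, y⟫ + ⟪Dap G₀ x, Dap G₀ y⟫

/-- The boundary data space `BD(G)`, the orthogonal complement of `D(G₀)` in `D_G`. -/
def BDG (G₀ : E →ₗ.[ℂ] H) (D₀ : H →ₗ.[ℂ] E) : Set E :=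
  {u | u ∈ (Gop D₀).domain ∧ ∀ v ∈ G₀.domain, innG D₀ u v = 0}

/-- The boundary data space `BD(D)`, the orthogonal complement of `D(D₀)` in `D_D`. -/
def BDD (G₀ : E →ₗ.[ℂ] H) (D₀ : H →ₗ.[ℂ] E) : Set H :=
  {w | w ∈ (Dop G₀).domain ∧ ∀ v ∈ D₀.domain, innD G₀ w v = 0}

variable {U E₀ : Type*}
  [NormedAddCommGroup U] [InnerProductSpace ℂ U] [CompleteSpace U]
  [NormedAddCommGroup E₀] [InnerProductSpace ℂ E₀] [CompleteSpace E₀]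

/-- Closedness of the operator `(L,K) : E₀ ⊆ E → H ⊕ U`: whenever `wₙ` in `E₀` with `wₙ → w`
in `E`, `Lwₙ → v` in `H` and `Kwₙ → z` in `U`, then `w ∈ E₀`, `Lw = v` and `Kw = z`. -/
def ClosedLK (j : E₀ →L[ℂ] E) (L : E₀ →L[ℂ] H) (K : E₀ →L[ℂ] U) : Prop :=
  ∀ (f : ℕ → E₀) (w : E) (v : H) (z : U),
    Tendsto (fun n => j (f n)) atTop (nhds w) →
    Tendsto (fun n => L (f n)) atTop (nhds v) →
    Tendsto (fun n => K (f n)) atTop (nhds z) →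
    ∃ w₀ : E₀, j w₀ = w ∧ L w₀ = v ∧ K w₀ = z

/-- The boundary relation `h` associated with `A`:
`h = {(x,y) ∈ BD(G) ⊕ BD(G) : π*x ∈ E₀, K^⋄Kπ*x − L^⋄π*Ġy ∈ E}`. -/
def hRel (G₀ : E →ₗ.[ℂ] H) (D₀ : H →ₗ.[ℂ] E) (j : E₀ →L[ℂ] E) (L : E₀ →L[ℂ] H)
    (K : E₀ →L[ℂ] U) : Set (E × E) :=
  {p | p.1 ∈ BDG G₀ D₀ ∧ p.2 ∈ BDG G₀ D₀ ∧
    ∃ x₀ : E₀, j x₀ = p.1 ∧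
      ∃ e : E, ∀ z : E₀, (⟪e, j z⟫ : ℂ) = ⟪K x₀, K z⟫ - ⟪Gap D₀ p.2, L z⟫}

/-- Monotonicity of a relation on `BD(G)` with respect to the graph inner product. -/
def IsMonotoneBDG (D₀ : H →ₗ.[ℂ] E) (h : Set (E × E)) : Prop :=
  ∀ p ∈ h, ∀ q ∈ h, 0 ≤ (innG D₀ (p.1 - q.1) (p.2 - q.2)).re

/-- Maximal monotonicity of a relation on the Hilbert space `BD(G)` (with the graph inner
product): `h` is monotone and has no proper monotone extension within `BD(G) ⊕ BD(G)`. -/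
def IsMaximalMonotoneBDG (G₀ : E →ₗ.[ℂ] H) (D₀ : H →ₗ.[ℂ] E) (h : Set (E × E)) : Prop :=
  h ⊆ (BDG G₀ D₀) ×ˢ (BDG G₀ D₀) ∧ IsMonotoneBDG D₀ h ∧
    ∀ b : Set (E × E), b ⊆ (BDG G₀ D₀) ×ˢ (BDG G₀ D₀) → IsMonotoneBDG D₀ b → h ⊆ b → b = h

theorem aux_Gap_add (D₀ : H →ₗ.[ℂ] E) {a b : E} (ha : a ∈ (Gop D₀).domain)
    (hb : b ∈ (Gop D₀).domain) : Gap D₀ (a + b) = Gap D₀ a + Gap D₀ b := by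
  have hab := (Gop D₀).domain.add_mem ha hb
  simp only [Gap, dif_pos ha, dif_pos hb, dif_pos hab]
  exact (Gop D₀).map_add ⟨a, ha⟩ ⟨b, hb⟩

theorem aux_Gap_smul (D₀ : H →ₗ.[ℂ] E) (c : ℂ) {a : E} (ha : a ∈ (Gop D₀).domain) :
    Gap D₀ (c • a) = c • Gap D₀ a := by
  have hca := (Gop D₀).domain.smul_mem c ha
  simp only [Gap, dif_pos ha, dif_pos hca]
  exact (Gop D₀).map_smul c ⟨a, ha⟩

theorem aux_Gap_neg (D₀ : H →ₗ.[ℂ] E) {a : E} (ha : a ∈ (Gop D₀).domain) :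
    Gap D₀ (-a) = -Gap D₀ a := by
  have := aux_Gap_smul D₀ (-1) ha
  simpa using this

theorem aux_Gap_sub (D₀ : H →ₗ.[ℂ] E) {a b : E} (ha : a ∈ (Gop D₀).domain)
    (hb : b ∈ (Gop D₀).domain) : Gap D₀ (a - b) = Gap D₀ a - Gap D₀ b := by
  rw [sub_eq_add_neg, aux_Gap_add D₀ ha ((Gop D₀).domain.neg_mem hb), aux_Gap_neg D₀ hb,
    sub_eq_add_neg]

theorem aux_BDG_add (G₀ : E →ₗ.[ℂ] H) (D₀ : H →ₗ.[ℂ] E) {a b : E} (ha : a ∈ BDG G₀ D₀)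
    (hb : b ∈ BDG G₀ D₀) : a + b ∈ BDG G₀ D₀ := by
  refine ⟨(Gop D₀).domain.add_mem ha.1 hb.1, fun v hv => ?_⟩
  have h1 := ha.2 v hv
  have h2 := hb.2 v hv
  simp only [innG, aux_Gap_add D₀ ha.1 hb.1, inner_add_left] at *
  linear_combination h1 + h2

theorem aux_BDG_smul (G₀ : E →ₗ.[ℂ] H) (D₀ : H →ₗ.[ℂ] E) (c : ℂ) {a : E}
    (ha : a ∈ BDG G₀ D₀) : c • a ∈ BDG G₀ D₀ := by
  refine ⟨(Gop D₀).domain.smul_mem c ha.1, fun v hv => ?_⟩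
  have h1 := ha.2 v hv
  simp only [innG, aux_Gap_smul D₀ c ha.1, inner_smul_left] at *
  linear_combination (starRingEnd ℂ c) * h1

theorem aux_BDG_sub (G₀ : E →ₗ.[ℂ] H) (D₀ : H →ₗ.[ℂ] E) {a b : E} (ha : a ∈ BDG G₀ D₀)
    (hb : b ∈ BDG G₀ D₀) : a - b ∈ BDG G₀ D₀ := by
  have := aux_BDG_add G₀ D₀ ha (aux_BDG_smul G₀ D₀ (-1) hb)
  simpa [sub_eq_add_neg] using this

theorem aux_exists (j : E₀ →L[ℂ] E) (L : E₀ →L[ℂ] H) (K : E₀ →L[ℂ] U)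
    (hclosed : ClosedLK j L K) (f : E) (g : H) :
    ∃ x₀ : E₀, ∀ z : E₀, (⟪f - j x₀, j z⟫ : ℂ) + ⟪g - L x₀, L z⟫ = ⟪K x₀, K z⟫ := by
  let T : E₀ →ₗ[ℂ] WithLp 2 (E × WithLp 2 (H × U)) :=
    { toFun := fun x => WithLp.toLp 2 (j x, WithLp.toLp 2 (L x, K x))
      map_add' := fun x y => by simp [← WithLp.toLp_add]
      map_smul' := fun c x => by simp [← WithLp.toLp_smul] }
  have hcl : IsClosed ((LinearMap.range T : Submodule ℂ _) : Set (WithLp 2 (E × WithLp 2 (H × U)))) := by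
    apply IsSeqClosed.isClosed
    intro s p hs hp
    choose F hF using hs
    have c1 : Continuous (fun q : WithLp 2 (E × WithLp 2 (H × U)) => q.fst) := by fun_prop
    have c2 : Continuous (fun q : WithLp 2 (E × WithLp 2 (H × U)) => q.snd.fst) := by fun_prop
    have c3 : Continuous (fun q : WithLp 2 (E × WithLp 2 (H × U)) => q.snd.snd) := by fun_prop
    obtain ⟨w, h1, h2, h3⟩ := hclosed F p.fst p.snd.fst p.snd.snd
      (by
        have := (c1.tendsto p).comp hp
        refine this.congr fun n => ?_
        simp only [Function.comp, ← hF n]; rfl)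
      (by
        have := (c2.tendsto p).comp hp
        refine this.congr fun n => ?_
        simp only [Function.comp, ← hF n]; rfl)
      (by
        have := (c3.tendsto p).comp hp
        refine this.congr fun n => ?_
        simp only [Function.comp, ← hF n]; rfl)
    refine ⟨w, ?_⟩
    change WithLp.toLp 2 (j w, WithLp.toLp 2 (L w, K w)) = p
    rw [h1, h2, h3]
    rfl
  have : CompleteSpace (LinearMap.range T) := hcl.completeSpace_coe
  let F : WithLp 2 (E × WithLp 2 (H × U)) := WithLp.toLp 2 (f, WithLp.toLp 2 (g, 0))
  obtain ⟨x₀, hx₀⟩ : (LinearMap.range T).starProjection F ∈ LinearMap.range T :=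
    Submodule.starProjection_apply_mem _ _
  have horth := Submodule.sub_starProjection_mem_orthogonal (K := LinearMap.range T) F
  rw [← hx₀] at horth
  refine ⟨x₀, fun z => ?_⟩
  have h := (Submodule.mem_orthogonal' _ _).1 horth (T z) ⟨z, rfl⟩
  have h' : (⟪f - j x₀, j z⟫ : ℂ) + (⟪g - L x₀, L z⟫ + ⟪0 - K x₀, K z⟫) = 0 := by
    simp only [WithLp.prod_inner_apply] at h
    exact h
  rw [zero_sub, inner_neg_left] at h'
  linear_combination h'

/-- [Trostorff 2015, Proposition 3.4]: the boundary relation `h` is linear and maximal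
monotone. -/
theorem hRel_linear_maximal_monotone (G₀ : E →ₗ.[ℂ] H) (D₀ : H →ₗ.[ℂ] E)
    (hG₀dense : Dense (G₀.domain : Set E)) (hD₀dense : Dense (D₀.domain : Set H))
    (hG₀closed : G₀.IsClosed) (hD₀closed : D₀.IsClosed)
    (hsub : G₀ ≤ Gop D₀)
    (j : E₀ →L[ℂ] E) (L : E₀ →L[ℂ] H) (K : E₀ →L[ℂ] U)
    (hj_inj : Function.Injective j) (hj_dense : DenseRange j)
    (hclosed : ClosedLK j L K)
    (hLsubG : ∀ x : E₀, j x ∈ (Gop D₀).domain ∧ L x = Gap D₀ (j x))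
    (hG₀subL : ∀ u ∈ G₀.domain, ∃ x : E₀, j x = u)
    (hK0 : ∀ x : E₀, j x ∈ G₀.domain → K x = 0) :
    -- `h` is a linear subspace of `BD(G) ⊕ BD(G)`
    (0 : E × E) ∈ hRel G₀ D₀ j L K ∧
    (∀ p ∈ hRel G₀ D₀ j L K, ∀ q ∈ hRel G₀ D₀ j L K, p + q ∈ hRel G₀ D₀ j L K) ∧
    (∀ c : ℂ, ∀ p ∈ hRel G₀ D₀ j L K, c • p ∈ hRel G₀ D₀ j L K) ∧
    -- and `h` is maximal monotone
    IsMaximalMonotoneBDG G₀ D₀ (hRel G₀ D₀ j L K) := by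
  -- the vector `e` in the definition of `h` is necessarily `y`
  have hGdom : ∀ v ∈ G₀.domain, v ∈ (Gop D₀).domain := fun v hv => hsub.1 hv
  have key : ∀ p ∈ hRel G₀ D₀ j L K, ∃ x₀ : E₀, j x₀ = p.1 ∧
      ∀ z : E₀, (⟪p.2, j z⟫ : ℂ) = ⟪K x₀, K z⟫ - ⟪Gap D₀ p.2, L z⟫ := by
    rintro p ⟨-, h2, x₀, hx, e, he⟩
    refine ⟨x₀, hx, ?_⟩
    have : e = p.2 := by
      refine hG₀dense.eq_of_inner_left (𝕜 := ℂ) fun v => ?_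
      intro hv
      obtain ⟨z, rfl⟩ := hG₀subL v hv
      have h := he z
      rw [hK0 z hv, inner_zero_right, (hLsubG z).2] at h
      have h' := h2.2 _ hv
      simp only [innG] at h'
      linear_combination h - h'
    intro z
    rw [← he z, this]
  have hadd : ∀ p ∈ hRel G₀ D₀ j L K, ∀ q ∈ hRel G₀ D₀ j L K, p + q ∈ hRel G₀ D₀ j L K := by
    rintro p ⟨hp1, hp2, x, hx, e, he⟩ q ⟨hq1, hq2, y, hy, e', he'⟩
    refine ⟨aux_BDG_add G₀ D₀ hp1 hq1, aux_BDG_add G₀ D₀ hp2 hq2, x + y, by simp [hx, hy],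
      e + e', fun z => ?_⟩
    rw [Prod.snd_add, aux_Gap_add D₀ hp2.1 hq2.1, map_add, inner_add_left, inner_add_left,
      inner_add_left, he, he']
    ring
  have hsmul : ∀ c : ℂ, ∀ p ∈ hRel G₀ D₀ j L K, c • p ∈ hRel G₀ D₀ j L K := by
    rintro c p ⟨hp1, hp2, x, hx, e, he⟩
    refine ⟨aux_BDG_smul G₀ D₀ c hp1, aux_BDG_smul G₀ D₀ c hp2, c • x, by simp [hx],
      c • e, fun z => ?_⟩
    rw [Prod.smul_snd, aux_Gap_smul D₀ c hp2.1, map_smul, inner_smul_left, inner_smul_left,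
      inner_smul_left, he]
    ring
  have hGap0 : Gap D₀ 0 = 0 := by
    have := aux_Gap_smul D₀ 0 (Gop D₀).domain.zero_mem
    simpa using this
  have h0 : (0 : E) ∈ BDG G₀ D₀ :=
    ⟨(Gop D₀).domain.zero_mem, fun v _ => by simp [innG, hGap0]⟩
  refine ⟨⟨h0, h0, 0, by simp, 0, fun z => by simp [hGap0]⟩, hadd, hsmul,
    fun p hp => ⟨hp.1, hp.2.1⟩, ?_, ?_⟩
  · intro p hp q hq
    have hpq : p - q ∈ hRel G₀ D₀ j L K := by
      have := hadd p hp _ (hsmul (-1) q hq)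
      simpa [sub_eq_add_neg] using this
    obtain ⟨x, hx, h⟩ := key _ hpq
    have h := h x
    rw [(hLsubG x).2, hx] at h
    have h1 : innG D₀ (p - q).2 (p - q).1 = ⟪K x, K x⟫ := by
      simp only [innG]
      linear_combination h
    have h2 : innG D₀ (p - q).1 (p - q).2 = starRingEnd ℂ (innG D₀ (p - q).2 (p - q).1) := by
      simp only [innG, map_add, inner_conj_symm]
    change 0 ≤ (innG D₀ (p - q).1 (p - q).2).re
    rw [h2, h1, Complex.conj_re]
    exact inner_self_nonneg (𝕜 := ℂ)
  · intro b hb hmon hhb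
    refine Set.Subset.antisymm ?_ hhb
    rintro ⟨u, w⟩ huw
    obtain ⟨hu, hw⟩ := hb huw
    simp only at hu hw
    have hf := aux_BDG_add G₀ D₀ hu hw
    obtain ⟨x₀, hx₀⟩ := aux_exists j L K hclosed (u + w) (Gap D₀ (u + w))
    have hx : j x₀ ∈ BDG G₀ D₀ := by
      refine ⟨(hLsubG x₀).1, fun v hv => ?_⟩
      obtain ⟨z, rfl⟩ := hG₀subL v hv
      have h := hx₀ z
      have h' := hf.2 _ hv
      rw [hK0 z hv, inner_zero_right, (hLsubG z).2, (hLsubG x₀).2, inner_sub_left,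
        inner_sub_left] at h
      simp only [innG] at *
      linear_combination h' - h
    have hy := aux_BDG_sub G₀ D₀ hf hx
    have hmem : (j x₀, u + w - j x₀) ∈ hRel G₀ D₀ j L K := by
      refine ⟨hx, hy, x₀, rfl, u + w - j x₀, fun z => ?_⟩
      have h := hx₀ z
      simp only
      rw [aux_Gap_sub D₀ hf.1 hx.1, ← (hLsubG x₀).2]
      linear_combination h
    have hm := hmon _ huw _ (hhb hmem)
    simp only at hm
    have hd := aux_BDG_sub G₀ D₀ hu hx
    have e1 : w - (u + w - j x₀) = -(u - j x₀) := by abel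
    rw [e1] at hm
    simp only [innG, aux_Gap_neg D₀ hd.1, inner_neg_right, Complex.add_re, Complex.neg_re] at hm
    have p1 : 0 ≤ (⟪Gap D₀ (u - j x₀), Gap D₀ (u - j x₀)⟫ : ℂ).re := inner_self_nonneg (𝕜 := ℂ)
    have p2 : (⟪u - j x₀, u - j x₀⟫ : ℂ).re ≤ 0 := by linarith
    have p3 : u - j x₀ = 0 := by
      have q := inner_self_eq_norm_sq (𝕜 := ℂ) (u - j x₀)
      have q2 : ‖u - j x₀‖ ^ 2 ≤ 0 := by rw [← q]; exact p2
      have q3 : ‖u - j x₀‖ = 0 := by nlinarith [norm_nonneg (u - j x₀)]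
      exact norm_eq_zero.1 q3
    have p4 : u = j x₀ := sub_eq_zero.1 p3
    have p5 : w = u + w - j x₀ := by rw [p4]; abel
    rw [← p5, ← p4] at hmem
    exact hmem
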